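/- arXiv:2301.02632 — 2 statements merged into one kernel-verified Lean document; each statement's English description precedes it below -/
import Mathlib

section
/- Let φ : ℝ⁵ → ℝ⁵ be the linear map with φe₁ = −e₂, φe₂ = −e₁, φe₃ = −e₄, φe₄ = −e₃, φe₅ = 0, let ζ = e₅, ν_x(u) = g_x(u, e₅) = −u₅, and let ∇ be the connection with Christoffel term Γ_x(u,w)_k = −(u_k w₅ + u₅ w_k) for 1 ≤ k ≤ 4, Γ_x(u,w)₅ = −e^{−2x₅}(u₁w₁ + u₂w₂ + u₃w₃ + u₄w₄). Then for all differentiable vector fields X, Y on H, ((∇_X (φ∘Y))(x) − φ((∇_X Y)(x)) = −g_x(φ X(x), Y(x)) e₅ − ν_x(Y(x)) φ X(x) for every x ∈ H; equivalently, Γ_x(u, φw) − φ(Γ_x(u,w)) = −g_x(φu, w) e₅ − ν_x(w) φu for all u, w ∈ ℝ⁵. (This is the defining identity (∇_E φ)F = −g(φE, F)ζ − ν(F)φE of an LP-Kenmotsu manifold.) -/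
/-!
Since `φ` is linear with constant coefficients, the derivative term of the connection commutes
with it, `D(φ ∘ Y) = φ ∘ DY`, so the field identity reduces to the pointwise identity between
`Γ(u, φw)` and `φ(Γ(u, w))`. The latter is a computation in coordinates: in components 1–4 the
terms `u₅ φw` cancel and `w₅ φu = -ν(w) φu` remains, while component 5 uses that `φ` is symmetric
for `g` and has no `e₅`-component.
-/

noncomputable section

open Real

/-- ℝ⁵ as the space of functions `Fin 5 → ℝ` (coordinates `x 0, …, x 4`). -/
abbrev V5 := Fin 5 → ℝ

/-- The open half-space `H = {x ∈ ℝ⁵ : x₅ > 0}`. -/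
def H5 : Set V5 := {x | 0 < x 4}

/-- The standard basis vector `eᵢ` of ℝ⁵. -/
def ee (i : Fin 5) : V5 := fun j => if j = i then 1 else 0

/-- The frame fields: `ϱᵢ(x) = e^{x₅} eᵢ` for `1 ≤ i ≤ 4`, `ϱ₅(x) = e₅`. -/
def vr (i : Fin 5) : V5 → V5 := fun x =>
  if i.val < 4 then Real.exp (x 4) • ee i else ee i

/-- Lie bracket of vector fields: `[X,Y](x) = DY(x)(X(x)) − DX(x)(Y(x))`. -/
def bracket (X Y : V5 → V5) : V5 → V5 := fun x =>
  fderiv ℝ Y x (X x) - fderiv ℝ X x (Y x)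

/-- The Lorentzian metric `g_x(u,w) = e^{−2x₅}(u₁w₁+u₂w₂+u₃w₃+u₄w₄) − u₅w₅`. -/
def gmet (x u w : V5) : ℝ :=
  Real.exp (-2 * x 4) * (u 0 * w 0 + u 1 * w 1 + u 2 * w 2 + u 3 * w 3) - u 4 * w 4

/-- The 1-form `ν_x(u) = g_x(u, ζ)` with `ζ = e₅`. -/
def nuf (x u : V5) : ℝ := gmet x u (ee 4)
/-- The Christoffel term `Γ_x(u,w)`. -/
def Gam (x u w : V5) : V5 := fun k =>
  if k.val < 4 then -(u k * w 4 + u 4 * w k)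
  else -(Real.exp (-2 * x 4) * (u 0 * w 0 + u 1 * w 1 + u 2 * w 2 + u 3 * w 3))

/-- The connection `(∇_X Y)(x) = DY(x)(X(x)) + Γ_x(X(x), Y(x))`. -/
def cov (X Y : V5 → V5) : V5 → V5 := fun x =>
  fderiv ℝ Y x (X x) + Gam x (X x) (Y x)

/-- `φ` in coordinates: it is determined by its values on the standard basis. -/
lemma phi_apply (φ : V5 →ₗ[ℝ] V5)
    (h1 : φ (ee 0) = -(ee 1)) (h2 : φ (ee 1) = -(ee 0))
    (h3 : φ (ee 2) = -(ee 3)) (h4 : φ (ee 3) = -(ee 2)) (h5 : φ (ee 4) = 0) (u : V5) :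
    φ u = ![-u 1, -u 0, -u 3, -u 2, 0] := by
  have hu : u = u 0 • ee 0 + u 1 • ee 1 + u 2 • ee 2 + u 3 • ee 3 + u 4 • ee 4 := by
    ext k
    fin_cases k <;> simp [ee]
  conv_lhs => rw [hu]
  simp only [map_add, map_smul, h1, h2, h3, h4, h5]
  ext k
  fin_cases k <;> simp [ee]

/-- With `φ` the linear map determined by `φe₁ = −e₂`, `φe₂ = −e₁`,
`φe₃ = −e₄`, `φe₄ = −e₃`, `φe₅ = 0`, `ζ = e₅`, and `ν_x(u) = g_x(u, e₅)`: for all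
differentiable vector fields `X, Y` on `H` and all `x ∈ H`,
`(∇_X(φ∘Y))(x) − φ((∇_X Y)(x)) = −g_x(φX(x), Y(x)) e₅ − ν_x(Y(x)) φX(x)`;
equivalently, `Γ_x(u, φw) − φ(Γ_x(u,w)) = −g_x(φu, w) e₅ − ν_x(w) φu` for all
`u, w ∈ ℝ⁵` (the defining identity `(∇_E φ)F = −g(φE,F)ζ − ν(F)φE` of an LP-Kenmotsu
manifold). -/
theorem statement6 (φ : V5 →ₗ[ℝ] V5)
    (h1 : φ (ee 0) = -(ee 1)) (h2 : φ (ee 1) = -(ee 0))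
    (h3 : φ (ee 2) = -(ee 3)) (h4 : φ (ee 3) = -(ee 2)) (h5 : φ (ee 4) = 0) :
    (∀ X Y : V5 → V5, (∀ x ∈ H5, DifferentiableAt ℝ X x) →
      (∀ x ∈ H5, DifferentiableAt ℝ Y x) →
      ∀ x ∈ H5,
        cov X (fun y => φ (Y y)) x - φ (cov X Y x) =
          -(gmet x (φ (X x)) (Y x)) • ee 4 - nuf x (Y x) • φ (X x)) ∧
    (∀ x ∈ H5, ∀ u w : V5,
      Gam x u (φ w) - φ (Gam x u w) = -(gmet x (φ u) w) • ee 4 - nuf x w • φ u) := by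
  have key : ∀ x u w : V5,
      Gam x u (φ w) - φ (Gam x u w) = -(gmet x (φ u) w) • ee 4 - nuf x w • φ u := by
    intro x u w
    simp only [phi_apply φ h1 h2 h3 h4 h5]
    ext k
    fin_cases k <;> simp [Gam, gmet, nuf, ee] <;> ring
  refine ⟨fun X Y _ hY x hx => ?_, fun x _ => key x⟩
  have hφ : fderiv ℝ (fun y => φ (Y y)) x (X x) = φ (fderiv ℝ Y x (X x)) := by
    have h := (LinearMap.toContinuousLinearMap φ).hasFDerivAt.comp x (hY x hx).hasFDerivAt
    exact congrArg (fun L => L (X x)) h.fderiv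
  rw [← key x (X x) (Y x)]
  simp only [cov, hφ, map_add]
  abel
end
end

section
/- Let g be the Lorentzian metric g_x(u,w) = e^{−2x₅}(u₁w₁ + u₂w₂ + u₃w₃ + u₄w₄) − u₅w₅ on H = {x ∈ ℝ⁵ : x₅ > 0}, with Levi-Civita connection (∇_X Y)(x) = (DY)(x)(X(x)) + Γ_x(X(x), Y(x)), where Γ_x(u,w)_k = −(u_k w₅ + u₅ w_k) for 1 ≤ k ≤ 4 and Γ_x(u,w)₅ = −e^{−2x₅}(u₁w₁ + u₂w₂ + u₃w₃ + u₄w₄). Let v : H → ℝ be twice continuously differentiable and let Dv be its g-gradient, the vector field (Dv)(x) = (e^{2x₅}∂₁v(x), e^{2x₅}∂₂v(x), e^{2x₅}∂₃v(x), e^{2x₅}∂₄v(x), −∂₅v(x)). If there is a constant c ∈ ℝ such that (D(Dv))(x)(u) + Γ_x(u, (Dv)(x)) = −c·u for every x ∈ H and every u ∈ ℝ⁵ (i.e. the g-Hessian of v equals −c·g), then v is constant on H and c = 0. Consequently any gradient Ricci–Yamabe soliton structure (g, Dv, Λ, σ, ρ) on this LP-Kenmotsu manifold is trivial, and Λ =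 10ρ − 4σ. -/
/-!
Write `Y = Dv`, `f = Y₅` and `t = x₅`. The soliton equation reads
`∂ᵢf = e^{−2t} Yᵢ`, `∂₅f = −c`, `∂₅Yᵢ = Yᵢ` and `∂ᵢYᵢ = f − c` for `i ≤ 4`
(`grad5_component_last`, `grad5_component_lt`). Since `Y` is differentiable, the explicit formula for
the derivative of `f` shows that `f` is twice differentiable, so `∂₅∂ᵢf = ∂ᵢ∂₅f`. The left-hand side
is `−2e^{−2t}Yᵢ + e^{−2t}Yᵢ = −e^{−2t}Yᵢ` and the right-hand side is `∂ᵢ(−c) = 0`, so `Yᵢ = 0` on `H`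
(`grad5_eq_zero_lt`; this is the curvature identity `R(e₅, eᵢ)Dv = 0`). Then `∂ᵢYᵢ = 0` gives
`f = c`, and `∂₅f = −c` gives `c = 0`; hence `Dv = 0` and `v` is constant on the convex set `H`.
-/

noncomputable section

open Real

/-- The partial derivative `∂ᵢ v (x) = Dv(x)(eᵢ)`. -/
def pd (v : V5 → ℝ) (i : Fin 5) (x : V5) : ℝ := fderiv ℝ v x (ee i)

/-- The `g`-gradient of `v`:
`Dv(x) = (e^{2x₅}∂₁v, e^{2x₅}∂₂v, e^{2x₅}∂₃v, e^{2x₅}∂₄v, −∂₅v)`. -/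
def grad5 (v : V5 → ℝ) (x : V5) : V5 :=
  ![Real.exp (2 * x 4) * pd v 0 x, Real.exp (2 * x 4) * pd v 1 x,
    Real.exp (2 * x 4) * pd v 2 x, Real.exp (2 * x 4) * pd v 3 x, -(pd v 4 x)]

/-- The `i`-th coordinate as a continuous linear form on ℝ⁵. -/
abbrev coord (i : Fin 5) : V5 →L[ℝ] ℝ :=
  ContinuousLinearMap.proj i

lemma isOpen_H5 : IsOpen H5 := isOpen_lt continuous_const (continuous_apply 4)

lemma differentiableAt_pd {v : V5 → ℝ} (hv : ContDiffOn ℝ 2 v H5) {x : V5} (hx : x ∈ H5)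
    (i : Fin 5) : DifferentiableAt ℝ (pd v i) x := by
  have h : ContDiffAt ℝ 2 v x := hv.contDiffAt (isOpen_H5.mem_nhds hx)
  have h1 : DifferentiableAt ℝ (fderiv ℝ v) x :=
    (h.fderiv_right (m := 1) (by norm_num)).differentiableAt (by norm_num)
  exact h1.clm_apply (differentiableAt_const _)

lemma differentiableAt_grad5 {v : V5 → ℝ} (hv : ContDiffOn ℝ 2 v H5) {x : V5} (hx : x ∈ H5) :
    DifferentiableAt ℝ (grad5 v) x := by
  have hp := differentiableAt_pd hv hx
  have he : DifferentiableAt ℝ (fun y : V5 => Real.exp (2 * y 4)) x := by fun_prop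
  rw [differentiableAt_pi]
  intro i
  fin_cases i
  · exact he.mul (hp 0)
  · exact he.mul (hp 1)
  · exact he.mul (hp 2)
  · exact he.mul (hp 3)
  · exact (hp 4).neg

lemma fderiv_grad5_apply {v : V5 → ℝ} (hv : ContDiffOn ℝ 2 v H5) {x : V5} (hx : x ∈ H5)
    (k : Fin 5) (u : V5) :
    fderiv ℝ (fun y => grad5 v y k) x u = fderiv ℝ (grad5 v) x u k := by
  have h := hasFDerivAt_pi'.1 (differentiableAt_grad5 hv hx).hasFDerivAt k
  rw [h.fderiv]
  rfl

lemma grad5_component_lt {v : V5 → ℝ} {c : ℝ} (hv : ContDiffOn ℝ 2 v H5)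
    (hsol : ∀ x ∈ H5, ∀ u : V5,
      fderiv ℝ (grad5 v) x u + Gam x u (grad5 v x) = -(c • u))
    {x : V5} (hx : x ∈ H5) {k : Fin 5} (hk : k.val < 4) (u : V5) :
    fderiv ℝ (fun y => grad5 v y k) x u = u k * (grad5 v x 4 - c) + u 4 * grad5 v x k := by
  have h := congrFun (hsol x hx u) k
  simp only [Pi.add_apply, Pi.neg_apply, Pi.smul_apply, smul_eq_mul, Gam, if_pos hk] at h
  rw [fderiv_grad5_apply hv hx]
  linarith

lemma grad5_component_last {v : V5 → ℝ} {c : ℝ} (hv : ContDiffOn ℝ 2 v H5)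
    (hsol : ∀ x ∈ H5, ∀ u : V5,
      fderiv ℝ (grad5 v) x u + Gam x u (grad5 v x) = -(c • u))
    {x : V5} (hx : x ∈ H5) (u : V5) :
    fderiv ℝ (fun y => grad5 v y 4) x u = -c * u 4 +
      Real.exp (-2 * x 4) * (u 0 * grad5 v x 0 + u 1 * grad5 v x 1 + u 2 * grad5 v x 2
        + u 3 * grad5 v x 3) := by
  have h := congrFun (hsol x hx u) 4
  have h4 : ¬ ((4 : Fin 5).val < 4) := by decide
  simp only [Pi.add_apply, Pi.neg_apply, Pi.smul_apply, smul_eq_mul, Gam, if_neg h4] at h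
  rw [fderiv_grad5_apply hv hx]
  linarith

/-- The spatial components of `Dv` vanish, by symmetry of the second derivative of the fifth
component applied to `(e₅, eₖ)`. -/
lemma grad5_eq_zero_lt {v : V5 → ℝ} {c : ℝ} (hv : ContDiffOn ℝ 2 v H5)
    (hsol : ∀ x ∈ H5, ∀ u : V5,
      fderiv ℝ (grad5 v) x u + Gam x u (grad5 v x) = -(c • u))
    {x : V5} (hx : x ∈ H5) {k : Fin 5} (hk : k.val < 4) :
    grad5 v x k = 0 := by
  have hev : ∀ᶠ y in nhds x, y ∈ H5 := isOpen_H5.mem_nhds hx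
  have hcomp : ∀ y ∈ H5, ∀ i, DifferentiableAt ℝ (fun z => grad5 v z i) y := fun y hy i =>
    differentiableAt_pi.1 (differentiableAt_grad5 hv hy) i
  have hdir : ∀ y ∈ H5, ∀ i : Fin 5, i.val < 4 →
      fderiv ℝ (fun y => grad5 v y 4) y (ee i) = Real.exp (-2 * y 4) * grad5 v y i := by
    intro y hy i hi
    rw [grad5_component_last hv hsol hy]
    fin_cases i <;> simp [ee] at hi ⊢
  have hdir4 : ∀ y ∈ H5, fderiv ℝ (fun y => grad5 v y 4) y (ee 4) = -c := by
    intro y hy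
    rw [grad5_component_last hv hsol hy]
    simp [ee]
  have hexp : ∀ y : V5, HasFDerivAt (fun z : V5 => Real.exp (-2 * z 4))
      (Real.exp (-2 * y 4) • ((-2 : ℝ) • coord 4)) y :=
    fun y => ((coord 4).hasFDerivAt.const_mul
      (-2 : ℝ)).exp
  -- On `H` the derivative of the fifth component is this explicit differentiable field of linear
  -- forms.
  let F : V5 → V5 →L[ℝ] ℝ := fun y =>
    (-c) • coord 4 +
      Real.exp (-2 * y 4) • (grad5 v y 0 • coord 0
      + grad5 v y 1 • coord 1
      + grad5 v y 2 • coord 2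
      + grad5 v y 3 • coord 3)
  have hF : ∀ y ∈ H5, fderiv ℝ (fun y => grad5 v y 4) y = F y := by
    intro y hy
    ext1 u
    rw [grad5_component_last hv hsol hy]
    simp [F]
    ring
  have hFd : DifferentiableAt ℝ F x := by
    have h := hcomp x hx
    refine (differentiableAt_const _).add ((hexp x).differentiableAt.smul ?_)
    exact ((((h 0).smul_const _).add ((h 1).smul_const _)).add ((h 2).smul_const _)).add
      ((h 3).smul_const _)
  have hsymm := second_derivative_symmetric_of_eventually (f := fun y => grad5 v y 4) (f' := F)
    (f'' := fderiv ℝ F x) (x := x)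
    (hev.mono fun y hy => by rw [← hF y hy]; exact (hcomp y hy 4).hasFDerivAt)
    hFd.hasFDerivAt (ee 4) (ee k)
  have happ : ∀ u w : V5, fderiv ℝ F x u w = fderiv ℝ (fun y => F y w) x u := by
    intro u w
    rw [fderiv_clm_apply hFd (differentiableAt_const w)]
    simp
  have hk' : (fun y => F y (ee k)) =ᶠ[nhds x] fun y => Real.exp (-2 * y 4) * grad5 v y k :=
    hev.mono fun y hy => by
      change F y (ee k) = _
      rw [← hF y hy, hdir y hy k hk]
  have h4' : (fun y => F y (ee 4)) =ᶠ[nhds x] fun _ => -c :=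
    hev.mono fun y hy => by
      change F y (ee 4) = _
      rw [← hF y hy, hdir4 y hy]
  have hk4 : (4 : Fin 5) ≠ k := by rintro rfl; exact absurd hk (by decide)
  rw [happ, happ, hk'.fderiv_eq, h4'.fderiv_eq,
    ((hexp x).fun_mul (hcomp x hx k).hasFDerivAt).fderiv] at hsymm
  simp [grad5_component_lt hv hsol hx hk, ee, hk4.symm] at hsymm
  have hpos := Real.exp_pos (-(2 * x 4))
  have : Real.exp (-(2 * x 4)) * grad5 v x k = 0 := by linarith
  exact (mul_eq_zero.1 this).resolve_left hpos.ne'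

lemma grad5_last_eq {v : V5 → ℝ} {c : ℝ} (hv : ContDiffOn ℝ 2 v H5)
    (hsol : ∀ x ∈ H5, ∀ u : V5,
      fderiv ℝ (grad5 v) x u + Gam x u (grad5 v x) = -(c • u))
    {x : V5} (hx : x ∈ H5) : grad5 v x 4 = c := by
  have hz : (fun y => grad5 v y 0) =ᶠ[nhds x] fun _ => 0 :=
    Filter.Eventually.mono (isOpen_H5.mem_nhds hx)
      fun y hy => grad5_eq_zero_lt hv hsol hy (by decide)
  have h := grad5_component_lt hv hsol hx (k := 0) (by decide) (ee 0)
  rw [hz.fderiv_eq] at h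
  simp [ee] at h
  linarith

lemma soliton_const_eq_zero {v : V5 → ℝ} {c : ℝ} (hv : ContDiffOn ℝ 2 v H5)
    (hsol : ∀ x ∈ H5, ∀ u : V5,
      fderiv ℝ (grad5 v) x u + Gam x u (grad5 v x) = -(c • u)) : c = 0 := by
  have hx : (fun _ => 1 : V5) ∈ H5 := by simp [H5]
  have hz : (fun y => grad5 v y 4) =ᶠ[nhds (fun _ => 1 : V5)] fun _ => c :=
    Filter.Eventually.mono (isOpen_H5.mem_nhds hx) fun y hy => grad5_last_eq hv hsol hy
  have h := grad5_component_last hv hsol hx (ee 4)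
  rw [hz.fderiv_eq] at h
  simpa [ee] using h

lemma fderiv_eq_zero_of_soliton {v : V5 → ℝ} {c : ℝ} (hv : ContDiffOn ℝ 2 v H5)
    (hsol : ∀ x ∈ H5, ∀ u : V5,
      fderiv ℝ (grad5 v) x u + Gam x u (grad5 v x) = -(c • u))
    {x : V5} (hx : x ∈ H5) : fderiv ℝ v x = 0 := by
  have hlt : ∀ k : Fin 5, k.val < 4 → grad5 v x k = 0 := fun k hk =>
    grad5_eq_zero_lt hv hsol hx hk
  have h4 : grad5 v x 4 = 0 := (grad5_last_eq hv hsol hx).trans (soliton_const_eq_zero hv hsol)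
  have hpd : ∀ i, fderiv ℝ v x (ee i) = 0 := by
    intro i
    fin_cases i
    · simpa [grad5, pd] using hlt 0 (by decide)
    · simpa [grad5, pd] using hlt 1 (by decide)
    · simpa [grad5, pd] using hlt 2 (by decide)
    · simpa [grad5, pd] using hlt 3 (by decide)
    · simpa [grad5, pd] using h4
  apply ContinuousLinearMap.coe_injective
  refine (Pi.basisFun ℝ (Fin 5)).ext fun i => ?_
  have hi : (Pi.basisFun ℝ (Fin 5)) i = ee i := by
    ext j
    simp [ee, Pi.single_apply]
  rw [hi]
  exact hpd i

/-- Let `v` be C² on `H` and `Dv` its `g`-gradient. If there is `c ∈ ℝ`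
with `(D(Dv))(x)(u) + Γ_x(u, Dv(x)) = −c·u` for all `x ∈ H`, `u ∈ ℝ⁵` (i.e. the
`g`-Hessian of `v` equals `−c·g`), then `v` is constant on `H` and `c = 0`. Consequently
any gradient Ricci–Yamabe soliton `(g, Dv, Λ, σ, ρ)` on this LP-Kenmotsu manifold
(where `c = Λ + 4σ − 10ρ`) is trivial, and `Λ = 10ρ − 4σ`. -/
theorem statement11 (v : V5 → ℝ) (σ ρ Λ c : ℝ) (hc : c = Λ + 4 * σ - 10 * ρ)
    (hv : ContDiffOn ℝ 2 v H5)
    (hsol : ∀ x ∈ H5, ∀ u : V5,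
      fderiv ℝ (grad5 v) x u + Gam x u (grad5 v x) = -(c • u)) :
    (∀ x ∈ H5, ∀ y ∈ H5, v x = v y) ∧ c = 0 ∧ Λ = 10 * ρ - 4 * σ := by
  have hc0 := soliton_const_eq_zero hv hsol
  refine ⟨fun x hx y hy => ?_, hc0, by linarith⟩
  have hconv : Convex ℝ H5 :=
    convex_halfSpace_gt (f := fun x : V5 => x 4) ⟨fun _ _ => rfl, fun _ _ => rfl⟩ 0
  exact isOpen_H5.is_const_of_fderiv_eq_zero hconv.isPreconnected
    (hv.differentiableOn (by norm_num)) (fun z hz => fderiv_eq_zero_of_soliton hv hsol hz) hx hy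
end
end
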